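/- arXiv:2406.11787 — 7 statements merged into one kernel-verified Lean document; each statement's English description precedes it below -/
import Mathlib

section
/- Let n ≥ 1 be an integer. Then in ℚ[X], the polynomial X^n − 1 divides (Σ_{k ∣ n} ψ_{n,k}) − 1, where the sum ranges over the positive divisors k of n. In other words, Σ_{k ∣ n} ψ_{n,k} ≡ 1 mod (X^n − 1). -/
open Polynomial

/-- For a positive divisor `k` of `n`, the idempotent polynomial
`ψ_{n,k} := (1/n) · X · Φ_k′ · ∏_{k′ ∣ n, k′ ≠ k} Φ_{k′} ∈ ℚ[X]`. -/
noncomputable def psi (n k : ℕ) : Polynomial ℚ :=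
  C ((n : ℚ))⁻¹ * (X * derivative (cyclotomic k ℚ) *
    ∏ k' ∈ n.divisors.erase k, cyclotomic k' ℚ)

/-- In `ℚ[X]`, `X^n − 1` divides `(Σ_{k ∣ n} ψ_{n,k}) − 1`. -/
theorem stmt_1 (n : ℕ) (hn : 1 ≤ n) :
    (X ^ n - 1 : Polynomial ℚ) ∣ (∑ k ∈ n.divisors, psi n k) - 1 := by
  have h : ∑ k ∈ n.divisors, psi n k
      = C ((n : ℚ))⁻¹ * (X * derivative (X ^ n - 1 : Polynomial ℚ)) := by
    rw [← prod_cyclotomic_eq_X_pow_sub_one hn ℚ, derivative_prod_finset, Finset.mul_sum,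
      Finset.mul_sum]
    refine Finset.sum_congr rfl fun k _ => ?_
    unfold psi
    ring
  have hd : derivative (X ^ n - 1 : Polynomial ℚ) = C (n : ℚ) * X ^ (n - 1) := by
    rw [derivative_sub, derivative_X_pow, derivative_one, sub_zero]
  have hx : (X : Polynomial ℚ) * X ^ (n - 1) = X ^ n := by
    rw [← pow_succ', Nat.sub_add_cancel hn]
  have hn0 : (n : ℚ) ≠ 0 := Nat.cast_ne_zero.mpr (by omega)
  have hc : (C ((n : ℚ))⁻¹ * C (n : ℚ) : Polynomial ℚ) = 1 := by
    rw [← C_mul, inv_mul_cancel₀ hn0, C_1]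
  have : ∑ k ∈ n.divisors, psi n k = X ^ n := by
    rw [h, hd, mul_left_comm X, hx, ← mul_assoc, hc, one_mul]
  rw [this]
end

section
/- Let n ≥ 1 be an integer and let k be a positive divisor of n. Then in ℚ[X], the polynomial X^n − 1 divides ψ_{n,k}² − ψ_{n,k}; that is, the image of ψ_{n,k} in ℚ[X]/(X^n − 1) is an idempotent element. -/
open Polynomial

/-- For a positive divisor `k` of `n`, `X^n − 1` divides `ψ_{n,k}² − ψ_{n,k}` in `ℚ[X]`,
that is, the image of `ψ_{n,k}` in `ℚ[X]/(X^n − 1)` is idempotent. -/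
theorem stmt_3 (n k : ℕ) (hn : 1 ≤ n) (hk : k ∈ n.divisors) :
    (X ^ n - 1 : Polynomial ℚ) ∣ psi n k ^ 2 - psi n k := by
  have hP : cyclotomic k ℚ * ∏ k' ∈ n.divisors.erase k, cyclotomic k' ℚ = X ^ n - 1 := by
    rw [Finset.mul_prod_erase _ (fun d => cyclotomic d ℚ) hk]
    exact prod_cyclotomic_eq_X_pow_sub_one hn ℚ
  unfold psi
  generalize (∏ k' ∈ n.divisors.erase k, cyclotomic k' ℚ) = P at *
  generalize cyclotomic k ℚ = A at *
  have hd := congrArg derivative hP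
  have hc : C ((n : ℚ))⁻¹ * C (n : ℚ) = 1 := by
    rw [← C_mul, inv_mul_cancel₀ (by positivity), C_1]
  have hx : (X : Polynomial ℚ) * X ^ (n - 1) = X ^ n := by
    rw [← pow_succ', Nat.sub_add_cancel hn]
  rw [derivative_mul, derivative_sub, derivative_X_pow, derivative_one, sub_zero] at hd
  rw [← hP]
  generalize C ((n : ℚ))⁻¹ = c at *
  refine ⟨c * X * derivative A * (P - c * X * derivative P), ?_⟩
  linear_combination (c * X * derivative A * P) * (c * X * hd + X * X ^ (n - 1) * hc + hx - hP)
end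

section
/- Let n ≥ 1 be an integer, let k be a positive divisor of n, and let ξ ∈ ℂ satisfy ξ^n = 1. Then ψ_{n,k}(ξ) = 1 if the multiplicative order of ξ equals k, and ψ_{n,k}(ξ) = 0 otherwise. (Equivalently, the character of ψ_{n,k} on ℤ/n is the characteristic function of the set of elements of ℤ/n of order exactly k.) -/
open Polynomial

/-- If `ξ ∈ ℂ` satisfies `ξ^n = 1` and `k` is a positive divisor of `n`, then
`ψ_{n,k}(ξ) = 1` when the multiplicative order of `ξ` equals `k`, and `ψ_{n,k}(ξ) = 0`
otherwise. -/
theorem stmt_5 (n k : ℕ) (hn : 1 ≤ n) (hk : k ∈ n.divisors) (ξ : ℂ) (hξ : ξ ^ n = 1) :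
    Polynomial.aeval ξ (psi n k) = if orderOf ξ = k then 1 else 0 := by
  have hroot : ∀ m, 0 < m → orderOf ξ = m → aeval ξ (cyclotomic m ℚ) = 0 := by
    intro m hm h
    have h1 : IsPrimitiveRoot ξ m := h ▸ IsPrimitiveRoot.orderOf ξ
    have h2 := h1.isRoot_cyclotomic hm
    rw [IsRoot.def, ← map_cyclotomic m (algebraMap ℚ ℂ), eval_map_algebraMap] at h2
    exact h2
  have hopos : 0 < orderOf ξ :=
    Nat.pos_of_dvd_of_pos (orderOf_dvd_of_pow_eq_one hξ) hn
  split_ifs with h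
  · have hk0 := hroot k (h ▸ hopos) h
    have hp := prod_cyclotomic_eq_X_pow_sub_one hn ℚ
    rw [← Finset.mul_prod_erase _ _ hk] at hp
    have hd := congrArg (fun p => aeval ξ (X * derivative p)) hp
    simp only [derivative_mul, map_mul, map_add, hk0, zero_mul, add_zero, derivative_sub,
      derivative_X_pow, derivative_one, sub_zero, aeval_X, map_pow, aeval_C] at hd
    have hn0 : (n : ℂ) ≠ 0 := by exact_mod_cast (by omega : n ≠ 0)
    have hpow : ξ * ξ ^ (n - 1) = 1 := by
      rw [← pow_succ', Nat.sub_add_cancel hn, hξ]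
    have hd' : ξ * (aeval ξ (derivative (cyclotomic k ℚ)) *
        aeval ξ (∏ x ∈ n.divisors.erase k, cyclotomic x ℚ)) = n := by
      rw [hd, mul_left_comm, hpow]; simp
    simp only [psi, map_mul, aeval_C, aeval_X]
    rw [mul_assoc ξ, hd']
    simp [hn0]
  · have hm : orderOf ξ ∈ n.divisors.erase k := by
      simp only [Finset.mem_erase, Nat.mem_divisors]
      exact ⟨h, orderOf_dvd_of_pow_eq_one hξ, by omega⟩
    simp only [psi, map_mul]
    rw [map_prod, Finset.prod_eq_zero hm (hroot _ hopos rfl)]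
    simp
end

section
/- Let n ≥ 1 be an integer and let k and l be two distinct positive divisors of n. Then the cyclotomic polynomials Φ_k and Φ_l are coprime in R[X] (they generate the unit ideal), where R = ℤ[1/n] is the localization of ℤ away from n. -/
open Polynomial

/-- For distinct positive divisors `k`, `l` of `n`, the cyclotomic polynomials `Φ_k` and
`Φ_l` are coprime over `R = ℤ[1/n]`, the localization of `ℤ` away from `n`. -/
theorem stmt_6 (n k l : ℕ) (hn : 1 ≤ n) (hk : k ∈ n.divisors) (hl : l ∈ n.divisors)
    (hkl : k ≠ l) :
    IsCoprime (cyclotomic k (Localization.Away (n : ℤ)))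
      (cyclotomic l (Localization.Away (n : ℤ))) := by
  have hu : IsUnit ((n : ℕ) : Localization.Away (n : ℤ)) := by
    have h := IsLocalization.Away.algebraMap_isUnit (S := Localization.Away (n : ℤ)) (n : ℤ)
    rwa [map_natCast] at h
  have hs : (X ^ n - C ((1 : (Localization.Away (n : ℤ))ˣ) : Localization.Away (n : ℤ))).Separable :=
    separable_X_pow_sub_C_unit 1 hu
  rw [Units.val_one, C_1, ← prod_cyclotomic_eq_X_pow_sub_one hn,
    ← Finset.mul_prod_erase _ _ hk,
    ← Finset.mul_prod_erase _ _ (Finset.mem_erase.2 ⟨hkl.symm, hl⟩), ← mul_assoc] at hs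
  exact hs.of_mul_left.isCoprime
end

section
/- Let n ≥ 1 be an integer and let R = ℤ[1/n] be the localization of ℤ away from n. The ring homomorphism R[X]/(X^n − 1) → ∏_{k ∣ n} R[X]/(Φ_k), induced by the quotient maps R[X] → R[X]/(Φ_k) for the positive divisors k of n, is an isomorphism of rings. -/
open Polynomial

/-- Let `R = ℤ[1/n]` be the localization of `ℤ` away from `n` (i.e. any commutative ring
satisfying `IsLocalization.Away (n : ℤ) R`).  The ring homomorphism
`R[X]/(X^n − 1) → ∏_{k ∣ n} R[X]/(Φ_k)` induced by the quotient maps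
`R[X] → R[X]/(Φ_k)` for the positive divisors `k` of `n` is an isomorphism of rings. -/
theorem stmt_7 (n : ℕ) (hn : 1 ≤ n) (R : Type) [CommRing R] [Algebra ℤ R]
    [IsLocalization.Away (n : ℤ) R] :
    ∃ e : (Polynomial R ⧸ Ideal.span ({X ^ n - 1} : Set (Polynomial R))) ≃+*
          (∀ k : n.divisors,
            Polynomial R ⧸ Ideal.span ({cyclotomic (k : ℕ) R} : Set (Polynomial R))),
      ∀ p : Polynomial R,
        e (Ideal.Quotient.mk _ p) = fun k => Ideal.Quotient.mk _ p := by
  have hu : IsUnit (n : R) := by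
    have h := IsLocalization.Away.algebraMap_isUnit (S := R) (n : ℤ)
    simpa using h
  have hsep : (X ^ n - 1 : R[X]).Separable := by
    have h := separable_X_pow_sub_C_unit (1 : Rˣ) hu
    simpa using h
  have hprod : ∏ k : n.divisors, cyclotomic (k : ℕ) R = X ^ n - 1 := by
    rw [← prod_cyclotomic_eq_X_pow_sub_one hn R]
    exact Finset.prod_coe_sort n.divisors (fun k => cyclotomic k R)
  have hcop : ∀ i j : n.divisors, i ≠ j →
      IsCoprime (cyclotomic (i : ℕ) R) (cyclotomic (j : ℕ) R) := by
    intro i j hij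
    apply Separable.isCoprime
    refine hsep.of_dvd ?_
    rw [← hprod, ← Finset.prod_pair (f := fun k : n.divisors => cyclotomic (k : ℕ) R) hij]
    exact Finset.prod_dvd_prod_of_subset _ _ _ (Finset.subset_univ _)
  have hI : Ideal.span ({X ^ n - 1} : Set R[X]) =
      ⨅ k : n.divisors, Ideal.span ({cyclotomic (k : ℕ) R} : Set R[X]) := by
    rw [Ideal.iInf_span_singleton hcop, hprod]
  refine ⟨(Ideal.quotEquivOfEq hI).trans (Ideal.quotientInfRingEquivPiQuotient _ ?_), ?_⟩
  · intro i j hij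
    exact (Ideal.isCoprime_span_singleton_iff _ _).2 (hcop i j hij)
  · intro p
    rfl
end

section
/- Let n ≥ 1 be an integer, let ϑ_n ∈ ℂ be a primitive n-th root of unity, and let D = ℤ[ϑ_n] be the subring of ℂ generated by ϑ_n (the ring of integers of the n-th cyclotomic field). Then a countable D-module M is projective as a D-module if and only if the underlying additive group of M is a free abelian group. -/
lemma aux_int_multiple {D : Type*} [CommRing D] [IsDomain D] [CharZero D] [Module.Finite ℤ D]
    (d : D) (hd : d ≠ 0) : ∃ (a : ℤ) (c : D), a ≠ 0 ∧ c * d = (a : D) := by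
  have h1 : Ideal.comap (algebraMap ℤ D) (Ideal.span {d}) ≠ ⊥ :=
    Ideal.comap_ne_bot_of_integral_mem hd (Ideal.mem_span_singleton_self d)
      (Algebra.IsIntegral.isIntegral d)
  obtain ⟨a, ha, ha0⟩ := Submodule.exists_mem_ne_zero_of_ne_bot h1
  rw [Ideal.mem_comap, Ideal.mem_span_singleton'] at ha
  obtain ⟨c, hc⟩ := ha
  exact ⟨a, c, ha0, by simpa using hc⟩

/-- saturation of a submodule -/
def auxSat {D M : Type*} [CommRing D] [AddCommGroup M] [Module D M]
    (N : Submodule D M) : Submodule D M := (Submodule.torsion D (M ⧸ N)).comap N.mkQ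

lemma mem_auxSat {D M : Type*} [CommRing D] [IsDomain D] [AddCommGroup M] [Module D M]
    (N : Submodule D M) (m : M) : m ∈ auxSat N ↔ ∃ d : D, d ≠ 0 ∧ d • m ∈ N := by
  simp only [auxSat, Submodule.mem_comap, Submodule.mem_torsion_iff, Submodule.mkQ_apply]
  constructor
  · rintro ⟨a, ha⟩
    refine ⟨a, nonZeroDivisors.coe_ne_zero a, ?_⟩
    rw [← Submodule.Quotient.mk_eq_zero]
    exact ha
  · rintro ⟨d, hd, h⟩
    refine ⟨⟨d, mem_nonZeroDivisors_of_ne_zero hd⟩, ?_⟩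
    rw [← Submodule.Quotient.mk_eq_zero] at h
    exact h

lemma auxSat_mono {D M : Type*} [CommRing D] [IsDomain D] [AddCommGroup M] [Module D M]
    {N N' : Submodule D M} (h : N ≤ N') : auxSat N ≤ auxSat N' := by
  intro m hm
  rw [mem_auxSat] at hm ⊢
  obtain ⟨d, hd, hm⟩ := hm
  exact ⟨d, hd, h hm⟩

lemma auxSat_torsionFree {D M : Type*} [CommRing D] [IsDomain D] [AddCommGroup M] [Module D M]
    (N : Submodule D M) : Module.IsTorsionFree D (M ⧸ auxSat N) := by
  refine .of_smul_eq_zero ?_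
  intro d x h
  induction x using Submodule.Quotient.induction_on with | _ x
  rw [← Submodule.Quotient.mk_smul, Submodule.Quotient.mk_eq_zero, mem_auxSat] at h
  obtain ⟨e, he, h⟩ := h
  by_cases hd : d = 0
  · exact Or.inl hd
  · right
    rw [Submodule.Quotient.mk_eq_zero, mem_auxSat]
    exact ⟨e * d, mul_ne_zero he hd, by rwa [mul_smul]⟩

lemma aux_sat_finite {D M F : Type*} [CommRing D] [IsDomain D] [CharZero D] [Module.Finite ℤ D]
    [AddCommGroup M] [Module D M] [AddCommGroup F] [Module.Free ℤ F]
    (j : M →ₗ[ℤ] F) (hj : Function.Injective j) (N : Submodule D M) (hN : N.FG) :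
    Module.Finite ℤ (auxSat N) := by
  classical
  let b := Module.Free.chooseBasis ℤ F
  let r : M →ₗ[ℤ] (Module.Free.ChooseBasisIndex ℤ F →₀ ℤ) := b.repr.toLinearMap ∘ₗ j
  have hr : Function.Injective r := b.repr.injective.comp hj
  have : Module.Finite D N := Module.Finite.iff_fg.mpr hN
  have : Module.Finite ℤ N := Module.Finite.trans D N
  obtain ⟨t, ht⟩ := (Module.Finite.iff_fg (R := ℤ) (N := N.restrictScalars ℤ)).mp this
  let S : Finset (Module.Free.ChooseBasisIndex ℤ F) := t.biUnion fun m => (r m).support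
  have hS : N.restrictScalars ℤ ≤ (Finsupp.supported ℤ ℤ (S : Set _)).comap r := by
    rw [← ht, Submodule.span_le]
    intro m hm
    simp only [Submodule.comap_coe, Set.mem_preimage, SetLike.mem_coe, Finsupp.mem_supported]
    exact_mod_cast Finset.subset_biUnion_of_mem (fun m => (r m).support) hm
  have hS' : ∀ m ∈ auxSat N, r m ∈ Finsupp.supported ℤ ℤ (S : Set _) := by
    intro m hm
    rw [mem_auxSat] at hm
    obtain ⟨d, hd, hm⟩ := hm
    obtain ⟨a, c, ha, hc⟩ := aux_int_multiple d hd
    have h1 : a • m ∈ N := by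
      rw [← Int.cast_smul_eq_zsmul D, ← hc, mul_smul]
      exact N.smul_mem _ hm
    have h2 : r (a • m) ∈ Finsupp.supported ℤ ℤ (S : Set _) := hS h1
    rw [Finsupp.mem_supported'] at h2 ⊢
    intro x hx
    have := h2 x hx
    simpa [ha] using this
  let f : auxSat N →ₗ[ℤ] Finsupp.supported ℤ ℤ (S : Set (Module.Free.ChooseBasisIndex ℤ F)) :=
    LinearMap.codRestrict _ (r ∘ₗ ((auxSat N).restrictScalars ℤ).subtype) (fun m => hS' m.1 m.2)
  have : Module.Finite ℤ (Finsupp.supported ℤ ℤ (S : Set (Module.Free.ChooseBasisIndex ℤ F))) :=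
    Module.Finite.equiv (Finsupp.supportedEquivFinsupp (M := ℤ) (R := ℤ)
      (S : Set (Module.Free.ChooseBasisIndex ℤ F))).symm
  refine Module.Finite.of_injective f ?_
  intro x y h
  have := congrArg Subtype.val h
  exact Subtype.ext (hr this)

lemma aux_torsionFree {D M F : Type*} [CommRing D] [IsDomain D] [CharZero D] [Module.Finite ℤ D]
    [AddCommGroup M] [Module D M] [AddCommGroup F] [Module.Free ℤ F]
    (j : M →ₗ[ℤ] F) (hj : Function.Injective j) : Module.IsTorsionFree D M := by
  refine .of_smul_eq_zero ?_
  intro d x h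
  by_cases hd : d = 0
  · exact Or.inl hd
  right
  obtain ⟨a, c, ha, hc⟩ := aux_int_multiple d hd
  have h1 : a • x = 0 := by rw [← Int.cast_smul_eq_zsmul D, ← hc, mul_smul, h, smul_zero]
  have h2 : a • j x = 0 := by rw [← map_smul, h1, map_zero]
  exact hj (by rw [(smul_eq_zero.mp h2).resolve_left ha, map_zero])

lemma aux_isInternal {D M : Type*} [CommRing D] [AddCommGroup M] [Module D M]
    (A C : ℕ → Submodule D M) (h0 : A 0 = ⊥) (hmono : Monotone A) (htop : ∀ m, ∃ k, m ∈ A k)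
    (hd : ∀ k, A k ⊓ C k = ⊥) (hs : ∀ k, A k ⊔ C k = A (k + 1)) : DirectSum.IsInternal C := by
  classical
  apply DirectSum.isInternal_submodule_of_iSupIndep_of_iSup_eq_top
  · apply iSupIndep_of_dfinsupp_lsum_injective
    rw [← LinearMap.ker_eq_bot, LinearMap.ker_eq_bot']
    intro f hf
    by_contra hne
    have hsup : f.support.Nonempty := by
      rw [Finset.nonempty_iff_ne_empty]
      simpa using hne
    let k := f.support.max' hsup
    have hk : k ∈ f.support := Finset.max'_mem _ _
    rw [DFinsupp.lsum_apply_apply, DFinsupp.sumAddHom_apply, DFinsupp.sum,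
      ← Finset.add_sum_erase _ _ hk] at hf
    have h1 : ∑ x ∈ f.support.erase k, (f x : M) ∈ A k := by
      refine Submodule.sum_mem _ fun i hi => ?_
      rw [Finset.mem_erase] at hi
      have hik : i + 1 ≤ k := lt_of_le_of_ne (Finset.le_max' _ _ hi.2) hi.1
      have : C i ≤ A (i + 1) := hs i ▸ le_sup_right
      exact hmono hik (this (f i).2)
    have h2 : (f k : M) ∈ A k := by
      have h3 : (f k : M) = - ∑ x ∈ f.support.erase k, (f x : M) := eq_neg_of_add_eq_zero_left hf
      rw [h3]
      exact neg_mem h1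
    have h4 : (f k : M) ∈ A k ⊓ C k := ⟨h2, (f k).2⟩
    rw [hd, Submodule.mem_bot] at h4
    rw [DFinsupp.mem_support_iff] at hk
    exact hk (Subtype.ext h4)
  · have hA : ∀ k, A k ≤ ⨆ i, C i := by
      intro k
      induction k with
      | zero => simp [h0]
      | succ k ih => rw [← hs]; exact sup_le ih (le_iSup C k)
    rw [eq_top_iff]
    intro m _
    obtain ⟨k, hk⟩ := htop m
    exact hA k hk

lemma aux_key {D M F : Type*} [CommRing D] [IsDedekindDomain D] [CharZero D] [Module.Finite ℤ D]
    [AddCommGroup M] [Module D M] [Countable M] [AddCommGroup F] [Module.Free ℤ F]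
    (j : M →ₗ[ℤ] F) (hj : Function.Injective j) :
    ∃ C : ℕ → Submodule D M, DirectSum.IsInternal C ∧ ∀ k, Module.Finite ℤ (C k) := by
  classical
  obtain ⟨e, he⟩ := exists_surjective_nat M
  let N : ℕ → Submodule D M := fun k => Submodule.span D ((Finset.range k).image e : Set M)
  have hNfg : ∀ k, (N k).FG := fun k => ⟨_, rfl⟩
  have hNmono : Monotone N := fun a b hab =>
    Submodule.span_mono (by exact_mod_cast Finset.image_subset_image (Finset.range_mono hab))
  let A : ℕ → Submodule D M := fun k => auxSat (N k)
  have hAmono : Monotone A := fun a b hab => auxSat_mono (hNmono hab)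
  have hAfin : ∀ k, Module.Finite ℤ (A k) := fun k => aux_sat_finite j hj _ (hNfg k)
  have htf : Module.IsTorsionFree D M := aux_torsionFree j hj
  have h0 : A 0 = ⊥ := by
    rw [eq_bot_iff]
    intro m hm
    rw [mem_auxSat] at hm
    obtain ⟨d, hd, hm⟩ := hm
    simp only [N, Finset.range_zero, Finset.image_empty, Finset.coe_empty, Submodule.span_empty,
      Submodule.mem_bot] at hm
    simpa [hd] using hm
  have htop : ∀ m, ∃ k, m ∈ A k := by
    intro m
    obtain ⟨i, rfl⟩ := he m
    refine ⟨i + 1, (mem_auxSat _ _).2 ⟨1, one_ne_zero, ?_⟩⟩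
    rw [one_smul]
    exact Submodule.subset_span (by
      simp only [Finset.coe_image]
      exact ⟨i, by simp, rfl⟩)
  have hC : ∀ k, ∃ C : Submodule D M, A k ⊓ C = ⊥ ∧ A k ⊔ C = A (k + 1) := by
    intro k
    have : Module.IsTorsionFree D (M ⧸ A k) := auxSat_torsionFree (N k)
    let g : A (k + 1) →ₗ[D] (M ⧸ A k) := (A k).mkQ ∘ₗ (A (k + 1)).subtype
    have : Module.Finite D (A (k + 1)) := Module.Finite.of_restrictScalars_finite ℤ D _
    have : Module.Finite D (LinearMap.range g) := inferInstance
    have : Module.Flat D (LinearMap.range g) := inferInstance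
    have : Module.FinitePresentation D (LinearMap.range g) :=
      Module.finitePresentation_of_finite D _
    have : Module.Projective D (LinearMap.range g) := Module.Flat.projective_of_finitePresentation
    obtain ⟨s, hs⟩ := Module.projective_lifting_property g.rangeRestrict LinearMap.id
      g.surjective_rangeRestrict
    have hs' : ∀ x, (A k).mkQ (s x : M) = x := fun x =>
      congrArg Subtype.val (LinearMap.congr_fun hs x)
    refine ⟨LinearMap.range ((A (k + 1)).subtype ∘ₗ s), ?_, ?_⟩
    · rw [eq_bot_iff]
      rintro m ⟨hm, x, rfl⟩
      have h1 : (A k).mkQ (s x : M) = 0 := by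
        simpa using hm
      have h2 : x = 0 := Subtype.ext ((hs' x).symm.trans h1)
      simp [h2]
    · apply le_antisymm
      · refine sup_le (hAmono (Nat.le_succ k)) ?_
        rintro m ⟨x, rfl⟩
        exact (s x).2
      · intro m hm
        let x : LinearMap.range g := g.rangeRestrict ⟨m, hm⟩
        have h1 : m - (s x : M) ∈ A k := by
          rw [← Submodule.Quotient.mk_eq_zero, ← Submodule.mkQ_apply, map_sub, hs', sub_eq_zero]
          rfl
        have h3 : (s x : M) ∈ LinearMap.range ((A (k + 1)).subtype ∘ₗ s) := ⟨x, rfl⟩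
        have h2 := Submodule.add_mem_sup h1 h3
        simpa using h2
  choose C hC1 hC2 using hC
  refine ⟨C, aux_isInternal A C h0 hAmono htop hC1 hC2, fun k => ?_⟩
  have hle : C k ≤ A (k + 1) := hC2 k ▸ le_sup_right
  have := hAfin (k + 1)
  exact Module.Finite.of_injective ((Submodule.inclusion hle).restrictScalars ℤ)
    (Submodule.inclusion_injective hle)

lemma aux_proj {D M F : Type*} [CommRing D] [IsDedekindDomain D] [CharZero D] [Module.Finite ℤ D]
    [AddCommGroup M] [Module D M] [Countable M] [AddCommGroup F] [Module.Free ℤ F]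
    (j : M →ₗ[ℤ] F) (hj : Function.Injective j) : Module.Projective D M := by
  obtain ⟨C, hC, hfin⟩ := aux_key (D := D) j hj
  have htf : Module.IsTorsionFree D M := aux_torsionFree j hj
  have hp : ∀ k, Module.Projective D (C k) := by
    intro k
    have := hfin k
    have : Module.Finite D (C k) := Module.Finite.of_restrictScalars_finite ℤ D _
    have : Module.Flat D (C k) := inferInstance
    have : Module.FinitePresentation D (C k) := Module.finitePresentation_of_finite D _
    exact Module.Flat.projective_of_finitePresentation
  exact Module.Projective.of_equiv (LinearEquiv.ofBijective (DirectSum.coeLinearMap C) hC)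

lemma aux_free {M F : Type*} [AddCommGroup M] [Countable M] [AddCommGroup F] [Module.Free ℤ F]
    (j : M →ₗ[ℤ] F) (hj : Function.Injective j) : Module.Free ℤ M := by
  obtain ⟨C, hC, hfin⟩ := aux_key (D := ℤ) j hj
  have htf : Module.IsTorsionFree ℤ M := aux_torsionFree j hj
  have hp : ∀ k, Module.Free ℤ (C k) := by
    intro k
    have := hfin k
    infer_instance
  exact Module.Free.of_equiv (LinearEquiv.ofBijective (DirectSum.coeLinearMap C) hC)

lemma aux_dedekind' (n : ℕ) (hn : 1 ≤ n) (K : Type) [Field K] [CharZero K]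
    [hcy : IsCyclotomicExtension {n} ℚ K] (ϑ : ℂ) (hϑ : IsPrimitiveRoot ϑ n) :
    IsDedekindDomain (Algebra.adjoin ℤ ({ϑ} : Set ℂ)) ∧
      Module.Finite ℤ (Algebra.adjoin ℤ ({ϑ} : Set ℂ)) := by
  have : NeZero n := ⟨by omega⟩
  have : NumberField K := IsCyclotomicExtension.numberField {n} ℚ K
  let f : K →ₐ[ℚ] ℂ := IsAlgClosed.lift
  obtain ⟨ζ, hζ, hfζ⟩ : ∃ ζ : K, IsPrimitiveRoot ζ n ∧ f ζ = ϑ := by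
    have h1 := IsCyclotomicExtension.zeta_spec n ℚ K
    have h2 := h1.map_of_injective (f := f) f.injective
    obtain ⟨i, _, hi, h⟩ := (h2.isPrimitiveRoot_iff).mp hϑ
    exact ⟨_, h1.pow_of_coprime i hi, by rw [map_pow, h]⟩
  have hcl := IsCyclotomicExtension.Rat.isIntegralClosure_adjoin_singleton (K := K) hζ
  let e := (Algebra.adjoin ℤ ({ζ} : Set K)).equivMapOfInjective (f.restrictScalars ℤ) f.injective
  have hmap : (Algebra.adjoin ℤ ({ζ} : Set K)).map (f.restrictScalars ℤ)
      = Algebra.adjoin ℤ ({ϑ} : Set ℂ) := by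
    rw [AlgHom.map_adjoin_singleton]
    simp [hfζ]
  let e' := e.trans (Subalgebra.equivOfEq _ _ hmap)
  have hint : IsIntegral ℤ ϑ := hϑ.isIntegral (by omega)
  refine ⟨?_, ?_⟩
  · let φ : Algebra.adjoin ℤ ({ϑ} : Set ℂ) →+* K :=
      (algebraMap (Algebra.adjoin ℤ ({ζ} : Set K)) K).comp
        (e'.symm : _ →+* _)
    let _ : Algebra (Algebra.adjoin ℤ ({ϑ} : Set ℂ)) K := φ.toAlgebra
    have : IsIntegralClosure (Algebra.adjoin ℤ ({ϑ} : Set ℂ)) ℤ K := by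
      refine ⟨?_, ?_⟩
      · exact (Subtype.val_injective).comp e'.symm.injective
      · intro x
        rw [hcl.isIntegral_iff]
        constructor
        · rintro ⟨y, rfl⟩
          refine ⟨e' y, ?_⟩
          change ((e'.symm (e' y) : _) : K) = _
          rw [e'.symm_apply_apply]
          rfl
        · rintro ⟨y, rfl⟩
          exact ⟨e'.symm y, rfl⟩
    exact IsIntegralClosure.isDedekindDomain ℤ ℚ K _
  · exact Module.Finite.iff_fg.mpr hint.fg_adjoin_singleton

lemma aux_dedekind (n : ℕ) (hn : 1 ≤ n) (ϑ : ℂ) (hϑ : IsPrimitiveRoot ϑ n) :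
    IsDedekindDomain (Algebra.adjoin ℤ ({ϑ} : Set ℂ)) ∧
      Module.Finite ℤ (Algebra.adjoin ℤ ({ϑ} : Set ℂ)) := by
  have : NeZero n := ⟨by omega⟩
  have h : @IsCyclotomicExtension {n} ℚ (CyclotomicField n ℚ) _ _
      (CyclotomicField.algebra n ℚ) := CyclotomicField.isCyclotomicExtension n ℚ
  rw [Subsingleton.elim (CyclotomicField.algebra n ℚ) DivisionRing.toRatAlgebra] at h
  exact aux_dedekind' n hn (CyclotomicField n ℚ) (hcy := h) ϑ hϑ


/-- Let `ϑ_n ∈ ℂ` be a primitive `n`-th root of unity and `D = ℤ[ϑ_n]` the subring of `ℂ`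
it generates (the ring of integers of the `n`-th cyclotomic field).  A countable
`D`-module `M` is projective over `D` if and only if its underlying additive group is a
free abelian group. -/
theorem stmt_10 (n : ℕ) (hn : 1 ≤ n) (ϑ : ℂ) (hϑ : IsPrimitiveRoot ϑ n)
    (M : Type) [AddCommGroup M] [Module (Algebra.adjoin ℤ ({ϑ} : Set ℂ)) M]
    [Countable M] :
    Module.Projective (Algebra.adjoin ℤ ({ϑ} : Set ℂ)) M ↔ Module.Free ℤ M := by
  obtain ⟨h1, h2⟩ := aux_dedekind n hn ϑ hϑ
  constructor
  · intro h
    obtain ⟨s, hs⟩ := h.out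
    have : Module.Free ℤ (M →₀ Algebra.adjoin ℤ ({ϑ} : Set ℂ)) := inferInstance
    exact aux_free (s.restrictScalars ℤ) hs.injective
  · intro h
    exact aux_proj (LinearMap.id : M →ₗ[ℤ] M) Function.injective_id
end

section
/- Let C be a triangulated category admitting countable coproducts. Then C is idempotent complete (Karoubian): every idempotent endomorphism p : A → A (with p ∘ p = p) splits, i.e., there exist an object B and morphisms r : A → B, s : B → A with r ∘ s = id_B and s ∘ r = p. In particular, any triangulated subcategory of C closed under countable coproducts is closed under direct summands. -/
open CategoryTheory CategoryTheory.Pretriangulated CategoryTheory.Limits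

universe v u

/-- A triangulated category admitting countable coproducts is idempotent complete
(Karoubian): every idempotent endomorphism `p : A → A` splits, i.e. there are an object
`B` and morphisms `r : A → B`, `s : B → A` with `r ∘ s = id_B` and `s ∘ r = p`. -/
theorem stmt_12 (C : Type u) [Category.{v} C] [HasZeroObject C] [Preadditive C]
    [HasShift C ℤ] [∀ m : ℤ, (shiftFunctor C m).Additive] [Pretriangulated C]
    [IsTriangulated C] [HasCountableCoproducts C] :
    ∀ (A : C) (p : A ⟶ A), p ≫ p = p →
      ∃ (B : C) (r : A ⟶ B) (s : B ⟶ A), s ≫ r = 𝟙 B ∧ r ≫ s = p := by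
  intro A p hp
  have : HasCoproduct (fun _ : ℕ => A) :=
    (HasCountableCoproducts.out (C := C) ℕ).has_colimit _
  let X : C := ∐ (fun _ : ℕ => A)
  let ι : ℕ → (A ⟶ X) := fun n => Sigma.ι (fun _ : ℕ => A) n
  have desc : ∀ {Y : C} (f : ℕ → (A ⟶ Y)), ∃ g : X ⟶ Y, ∀ n, ι n ≫ g = f n :=
    fun f => ⟨Sigma.desc f, fun n => by simp [ι]⟩
  have ext : ∀ {Y : C} (f g : X ⟶ Y), (∀ n, ι n ≫ f = ι n ≫ g) → f = g :=
    fun f g h => Sigma.hom_ext _ _ h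
  -- the cone of `u = 1 - (shift of p)` is the homotopy colimit of `A ⟶ A ⟶ ⋯`
  obtain ⟨u, hu⟩ := desc (fun n => ι n - p ≫ ι (n + 1))
  -- `u` is a split monomorphism
  obtain ⟨v, hv⟩ := desc (fun n => ι n - p ≫ ι n - p ≫ ∑ k ∈ Finset.range n, ι k)
  have huv : u ≫ v = 𝟙 X := by
    apply ext
    intro n
    rw [← Category.assoc, hu, Preadditive.sub_comp, Category.assoc, hv, hv,
      Finset.sum_range_succ]
    simp only [Preadditive.comp_sub, Preadditive.comp_add, ← Category.assoc, hp,
      Category.comp_id]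
    abel
  obtain ⟨B, g, d, hT⟩ := distinguished_cocone_triangle u
  have hug : u ≫ g = 0 := comp_distTriang_mor_zero₁₂ _ hT
  have hd : d = 0 := by
    have h1 : d ≫ (shiftFunctor C (1 : ℤ)).map u = 0 := comp_distTriang_mor_zero₃₁ _ hT
    have h2 : (shiftFunctor C (1 : ℤ)).map u ≫ (shiftFunctor C (1 : ℤ)).map v = 𝟙 _ := by
      rw [← Functor.map_comp, huv, CategoryTheory.Functor.map_id]
    calc d = d ≫ (shiftFunctor C (1 : ℤ)).map u ≫ (shiftFunctor C (1 : ℤ)).map v := by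
          rw [h2]; exact (Category.comp_id d).symm
      _ = 0 := by rw [← Category.assoc, h1, zero_comp]
  have hepi : Epi g := (Triangle.mor₃_eq_zero_iff_epi₂ _ hT).1 hd
  obtain ⟨t, ht⟩ := desc (fun _ => p)
  have hut : u ≫ t = 0 := by
    apply ext
    intro n
    rw [← Category.assoc, hu, Preadditive.sub_comp, Category.assoc, ht, ht, hp, sub_self,
      comp_zero]
  obtain ⟨s, hs⟩ : ∃ s : B ⟶ A, t = g ≫ s := Triangle.yoneda_exact₂ _ hT t hut
  have hg : ∀ n, ι n ≫ g = p ≫ ι (n + 1) ≫ g := by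
    intro n
    have h : ι n ≫ u ≫ g = 0 := by rw [hug, comp_zero]
    rw [← Category.assoc, hu, Preadditive.sub_comp, Category.assoc] at h
    exact sub_eq_zero.1 h
  have hpg : ∀ n, p ≫ ι n ≫ g = ι n ≫ g := by
    intro n
    rw [hg n, ← Category.assoc p p, hp]
  have hg0 : ∀ n, ι n ≫ g = ι 0 ≫ g := by
    intro n
    induction n with
    | zero => rfl
    | succ n ih => rw [← ih, hg n, hpg]
  refine ⟨B, ι 0 ≫ g, s, ?_, ?_⟩
  · rw [← cancel_epi g]
    apply ext
    intro n
    rw [Category.comp_id, ← Category.assoc g, ← hs, ← Category.assoc, ht, hpg, hg0 n]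
  · rw [Category.assoc, ← hs, ht]
end
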